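/- Let X, Y, μ, ν, c, ε, φ₁, φ₂ (satisfying Assumption A) and partitions 𝒥_A, 𝒥_B of X be as in the parallel domain decomposition setting. Consider the 'swift' weight rule Θ_swift, which given ((π_J)_J, (π̃_J)_J) returns whichever of the two weight vectors (1/|𝒥|, …, 1/|𝒥|) and (1, …, 1) yields the smaller value of E for the resulting updated plan, and the 'opt' weight rule Θ_opt, which returns a minimizer over (θ_J)_J ∈ [0,1]^𝒥 of E(Σ_J (1−θ_J)π_J + θ_J π̃_J). Then for each of these weight rules, the parallel domain decomposition iterates generated by alternating the partitions 𝒥_A and 𝒥_B from any initial plan π⁰ with E(π⁰) < ∞ converge pointwise to the unique global minimizer of E. -/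

import Mathlib

open Filter Topology
open scoped Classical

noncomputable section

/-- `φ : ℝ → ℝ ∪ {+∞}` is an entropy function: lower semicontinuous, convex,
`dom(φ) ⊆ [0,∞)`, `dom(φ)\{0} ≠ ∅`, never taking the value `-∞`. -/
def IsEntropyFn (φ : ℝ → EReal) : Prop :=
  LowerSemicontinuous φ ∧
  (∀ x y a b : ℝ, 0 ≤ a → 0 ≤ b → a + b = 1 →
      φ (a * x + b * y) ≤ (a : EReal) * φ x + (b : EReal) * φ y) ∧
  (∀ x : ℝ, φ x ≠ ⊥) ∧
  (∀ x : ℝ, φ x < ⊤ → 0 ≤ x) ∧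
  (∃ x : ℝ, x ≠ 0 ∧ φ x < ⊤)

/-- The recession slope `φ'_∞ = lim_{x→∞} φ(x)/x`. -/
def recessionSlope (φ : ℝ → EReal) : EReal :=
  Filter.limsup (fun x : ℝ => φ x * ((x⁻¹ : ℝ) : EReal)) Filter.atTop

/-- The `φ`-divergence on a finite set `Z`:
`D_φ(ρ|σ) = ∑_{z : σ z > 0} σ z · φ(ρ z / σ z) + φ'_∞ · ∑_{z : σ z = 0} ρ z`. -/
def divergence {Z : Type*} [Fintype Z] (φ : ℝ → EReal) (ρ σ : Z → ℝ) : EReal :=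
  (∑ z, if 0 < σ z then (σ z : EReal) * φ (ρ z / σ z) else 0)
    + recessionSlope φ * ((∑ z, if σ z = 0 then ρ z else 0 : ℝ) : EReal)

/-- The convex conjugate `φ*(z) = sup_{x ∈ ℝ} (z·x − φ(x))`. -/
def conjFn (φ : ℝ → EReal) (z : ℝ) : EReal :=
  ⨆ x : ℝ, (((z * x : ℝ) : EReal) - φ x)

/-- Kullback–Leibler divergence on a finite set, with `0·log 0 = 0`:
`KL(ρ|σ) = ∑ z (ρ z log(ρ z/σ z) − ρ z + σ z)` if `ρ ≪ σ`, else `+∞`. -/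
def KLfin {Z : Type*} [Fintype Z] (ρ σ : Z → ℝ) : EReal :=
  if ∀ z, σ z = 0 → ρ z = 0 then
    ((∑ z, (ρ z * Real.log (ρ z / σ z) - ρ z + σ z) : ℝ) : EReal)
  else ⊤

/-- Assumption A: the entropy function `φ` is nonnegative, finite on `[0,∞)`,
and continuously differentiable on the interior `(0,∞)` of its domain. -/
def AssumptionA (φ : ℝ → EReal) : Prop :=
  IsEntropyFn φ ∧ (∀ x : ℝ, 0 ≤ φ x) ∧ (∀ x : ℝ, 0 ≤ x → φ x ≠ ⊤) ∧
  ContDiffOn ℝ 1 (fun s : ℝ => (φ s).toReal) (Set.Ioi (0 : ℝ))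

/-- Primal objective of the unbalanced (cell) problem with `Y`-submarginal `νm`:
`E_J(π|νm) = ⟨c, π⟩ + ε KL(π | μ⊗ν) + D_{φ₁}(P_X π | μ) + D_{φ₂}(P_Y π + νm | ν)`. -/
def EJfun {W Y : Type*} [Fintype W] [Fintype Y]
    (c : W → Y → ℝ) (ε : ℝ) (φ₁ φ₂ : ℝ → EReal)
    (μ : W → ℝ) (ν : Y → ℝ) (νm : Y → ℝ) (π : W → Y → ℝ) : EReal :=
  ((∑ x, ∑ y, c x y * π x y : ℝ) : EReal)
    + (ε : EReal) * KLfin (fun p : W × Y => π p.1 p.2) (fun p : W × Y => μ p.1 * ν p.2)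
    + divergence φ₁ (fun x => ∑ y, π x y) μ
    + divergence φ₂ (fun y => (∑ x, π x y) + νm y) ν

/-- Dual objective of the unbalanced (cell) problem with `Y`-submarginal `νm`. -/
def DJfun {W Y : Type*} [Fintype W] [Fintype Y]
    (c : W → Y → ℝ) (ε : ℝ) (φ₁ φ₂ : ℝ → EReal)
    (μ : W → ℝ) (ν : Y → ℝ) (νm : Y → ℝ) (α : W → ℝ) (β : Y → ℝ) : EReal :=
  ((ε * ∑ x, ∑ y, (1 - Real.exp ((α x + β y - c x y) / ε)) * (μ x * ν y) : ℝ) : EReal)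
    - (∑ x, (μ x : EReal) * conjFn φ₁ (-(α x)))
    - (∑ y, (ν y : EReal) * conjFn φ₂ (-(β y)))
    - ((∑ y, β y * νm y : ℝ) : EReal)

/-- The `Y`-submarginal `ν_{-J}` of the plan `π` outside the cell `J`:
`ν_{-J}(y) = ∑_{x ∉ J} π(x,y)`. -/
def outMarg {X Y : Type*} [Fintype X] (J : Set X) (π : X → Y → ℝ) : Y → ℝ :=
  fun y => ∑ x, (Jᶜ).indicator (fun x' => π x' y) x

/-- The global unbalanced objective
`E(π) = ⟨c, π⟩ + ε KL(π|μ⊗ν) + D_{φ₁}(P_X π|μ) + D_{φ₂}(P_Y π|ν)`. -/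
def Eglobal {X Y : Type*} [Fintype X] [Fintype Y]
    (c : X → Y → ℝ) (ε : ℝ) (φ₁ φ₂ : ℝ → EReal)
    (μ : X → ℝ) (ν : Y → ℝ) (π : X → Y → ℝ) : EReal :=
  EJfun c ε φ₁ φ₂ μ ν (fun _ => 0) π

/-- An indexed family `Js : Fin n → Set X` is a partition of `X` into nonempty
subsets. -/
def IsFinPartition {X : Type*} {n : ℕ} (Js : Fin n → Set X) : Prop :=
  (∀ i, (Js i).Nonempty) ∧ (⋃ i, Js i) = Set.univ ∧
    ∀ i j, i ≠ j → Disjoint (Js i) (Js j)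

/-- `update` implements one cell update: `update J π` agrees with `π` outside
`J × Y` and its restriction to `J × Y` is the (unique) minimizer of the cell
subproblem `E_J(·|ν_{-J})` with `ν_{-J}(y) = ∑_{x ∉ J} π(x,y)`. -/
def IsCellUpdate {X Y : Type*} [Fintype X] [Fintype Y]
    (c : X → Y → ℝ) (ε : ℝ) (φ₁ φ₂ : ℝ → EReal) (μ : X → ℝ) (ν : Y → ℝ)
    (update : Set X → (X → Y → ℝ) → (X → Y → ℝ)) : Prop :=
  ∀ (J : Set X) (π : X → Y → ℝ), (∀ x y, 0 ≤ π x y) →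
    (∀ x y, 0 ≤ update J π x y) ∧
    (∀ x, x ∉ J → ∀ y, update J π x y = π x y) ∧
    ∀ π' : ↥J → Y → ℝ, (∀ (j : J) (y : Y), 0 ≤ π' j y) →
      EJfun (fun (j : J) y => c j y) ε φ₁ φ₂ (fun (j : J) => μ j) ν (outMarg J π)
          (fun (j : J) y => update J π j y)
        ≤ EJfun (fun (j : J) y => c j y) ε φ₁ φ₂ (fun (j : J) => μ j) ν (outMarg J π) π'

/-- One sequential domain decomposition sweep: cycle through the cells of the
partition in their fixed order, updating the current plan after each cell. -/
def sweep {X Y : Type*} (update : Set X → (X → Y → ℝ) → (X → Y → ℝ))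
    {n : ℕ} (Js : Fin n → Set X) (π : X → Y → ℝ) : X → Y → ℝ :=
  (List.ofFn Js).foldl (fun p J => update J p) π

/-- The restriction of a plan to the cell `J × Y`, extended by zero. -/
def cellRestr {X Y : Type*} (J : Set X) (π : X → Y → ℝ) : X → Y → ℝ :=
  fun x y => J.indicator (fun x' => π x' y) x

/-- Convex combination `∑_J (1 − θ_J) π_J + θ_J π̃_J` of cell plans. -/
def combPlan {X Y : Type*} {n : ℕ}
    (πJ tπ : Fin n → X → Y → ℝ) (θ : Fin n → ℝ) : X → Y → ℝ :=
  fun x y => ∑ i, ((1 - θ i) * πJ i x y + θ i * tπ i x y)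

/-- `S i π` is the unique minimizer of the cell subproblem on cell `Js i`
with `Y`-submarginal `ν_{-J}(y) = ∑_{x ∉ Js i} π(x,y)`, extended by zero. -/
def IsSolveMap {X Y : Type*} [Fintype X] [Fintype Y]
    (c : X → Y → ℝ) (ε : ℝ) (φ₁ φ₂ : ℝ → EReal) (μ : X → ℝ) (ν : Y → ℝ)
    {n : ℕ} (Js : Fin n → Set X)
    (S : Fin n → (X → Y → ℝ) → (X → Y → ℝ)) : Prop :=
  ∀ (i : Fin n) (π : X → Y → ℝ), (∀ x y, 0 ≤ π x y) →
    (∀ x y, 0 ≤ S i π x y) ∧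
    (∀ x, x ∉ Js i → ∀ y, S i π x y = 0) ∧
    ∀ π' : ↥(Js i) → Y → ℝ, (∀ (j : Js i) (y : Y), 0 ≤ π' j y) →
      EJfun (fun (j : Js i) y => c j y) ε φ₁ φ₂ (fun (j : Js i) => μ j) ν
          (outMarg (Js i) π) (fun (j : Js i) y => S i π j y)
        ≤ EJfun (fun (j : Js i) y => c j y) ε φ₁ φ₂ (fun (j : Js i) => μ j) ν
          (outMarg (Js i) π) π'

/-- One parallel domain decomposition iteration with weight rule `Θ`: solve all
cell subproblems in parallel and take the convex combination of old and new cell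
plans with weights `Θ((π_J)_J, (π̃_J)_J)`. -/
def parUpdate {X Y : Type*} {n : ℕ} (Js : Fin n → Set X)
    (S : Fin n → (X → Y → ℝ) → (X → Y → ℝ))
    (Θ : (Fin n → X → Y → ℝ) → (Fin n → X → Y → ℝ) → Fin n → ℝ)
    (π : X → Y → ℝ) : X → Y → ℝ :=
  combPlan (fun i => cellRestr (Js i) π) (fun i => S i π)
    (Θ (fun i => cellRestr (Js i) π) (fun i => S i π))

/-- The "swift" weight rule: given the families of current cell plans and cell
minimizers, return whichever of the weight vectors `(1/|𝒥|,…,1/|𝒥|)` and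
`(1,…,1)` yields the smaller value of `E` for the resulting updated plan. -/
def IsSwiftRule {X Y : Type*} [Fintype X] [Fintype Y]
    (c : X → Y → ℝ) (ε : ℝ) (φ₁ φ₂ : ℝ → EReal) (μ : X → ℝ) (ν : Y → ℝ)
    {n : ℕ}
    (Θ : (Fin n → X → Y → ℝ) → (Fin n → X → Y → ℝ) → Fin n → ℝ) : Prop :=
  ∀ πJ tπ : Fin n → X → Y → ℝ,
    (Θ πJ tπ = (fun _ => 1 / (n : ℝ)) ∨ Θ πJ tπ = fun _ => 1) ∧
    Eglobal c ε φ₁ φ₂ μ ν (combPlan πJ tπ (Θ πJ tπ))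
      ≤ Eglobal c ε φ₁ φ₂ μ ν (combPlan πJ tπ (fun _ => 1 / (n : ℝ))) ∧
    Eglobal c ε φ₁ φ₂ μ ν (combPlan πJ tπ (Θ πJ tπ))
      ≤ Eglobal c ε φ₁ φ₂ μ ν (combPlan πJ tπ (fun _ => 1))

/-- The "opt" weight rule: given the families of current cell plans and cell
minimizers, return a minimizer over `(θ_J)_J ∈ [0,1]^𝒥` of
`E(∑_J (1−θ_J)π_J + θ_J π̃_J)`. -/
def IsOptRule {X Y : Type*} [Fintype X] [Fintype Y]
    (c : X → Y → ℝ) (ε : ℝ) (φ₁ φ₂ : ℝ → EReal) (μ : X → ℝ) (ν : Y → ℝ)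
    {n : ℕ}
    (Θ : (Fin n → X → Y → ℝ) → (Fin n → X → Y → ℝ) → Fin n → ℝ) : Prop :=
  ∀ πJ tπ : Fin n → X → Y → ℝ,
    (∀ i, Θ πJ tπ i ∈ Set.Icc (0 : ℝ) 1) ∧
    ∀ θ' : Fin n → ℝ, (∀ i, θ' i ∈ Set.Icc (0 : ℝ) 1) →
      Eglobal c ε φ₁ φ₂ μ ν (combPlan πJ tπ (Θ πJ tπ))
        ≤ Eglobal c ε φ₁ φ₂ μ ν (combPlan πJ tπ θ')

/-- Real-valued consequences of Assumption A. -/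
def GoodFn (f : ℝ → ℝ) : Prop :=
  ConvexOn ℝ (Set.Ici 0) f ∧ ContinuousOn f (Set.Ici 0) ∧ (∀ s, 0 ≤ s → 0 ≤ f s) ∧
    ∀ s, 0 < s → DifferentiableAt ℝ f s

lemma coe_sum_EReal {Z : Type*} (s : Finset Z) (f : Z → ℝ) :
    ((∑ z ∈ s, f z : ℝ) : EReal) = ∑ z ∈ s, (f z : EReal) := by
  induction s using Finset.induction_on with
  | empty => simp
  | insert a s ha ih => rw [Finset.sum_insert ha, Finset.sum_insert ha, EReal.coe_add, ih]

lemma AssumptionA.coe {φ : ℝ → EReal} (h : AssumptionA φ) {s : ℝ} (hs : 0 ≤ s) :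
    (((φ s).toReal : ℝ) : EReal) = φ s :=
  EReal.coe_toReal (h.2.2.1 s hs) (h.1.2.2.1 s)

lemma AssumptionA.good {φ : ℝ → EReal} (h : AssumptionA φ) : GoodFn (fun s => (φ s).toReal) := by
  have hconv : ConvexOn ℝ (Set.Ici 0) (fun s => (φ s).toReal) := by
    refine ⟨convex_Ici 0, ?_⟩
    intro x hx y hy a b ha hb hab
    have hx' : (0 : ℝ) ≤ x := hx
    have hy' : (0 : ℝ) ≤ y := hy
    have := h.1.2.1 x y a b ha hb hab
    rw [← h.coe hx', ← h.coe hy', ← h.coe (by positivity : 0 ≤ a * x + b * y)] at this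
    simp only [smul_eq_mul]
    exact_mod_cast this
  have hdiff : ∀ s, 0 < s → DifferentiableAt ℝ (fun s => (φ s).toReal) s := fun s hs =>
    (h.2.2.2.differentiableOn (by norm_num)).differentiableAt (Ioi_mem_nhds hs)
  refine ⟨hconv, ?_, fun s _ => EReal.toReal_nonneg (h.2.1 s), hdiff⟩
  intro s hs
  rcases (show (0 : ℝ) ≤ s from hs).eq_or_lt with rfl | hs'
  · rw [ContinuousWithinAt, tendsto_order]
    constructor
    · intro a ha
      have h1 : (a : EReal) < φ 0 := by
        rw [← h.coe le_rfl]; exact_mod_cast ha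
      have h2 := (h.1.1 0) _ h1
      filter_upwards [nhdsWithin_le_nhds h2, self_mem_nhdsWithin] with x hx hx0
      rw [← h.coe hx0] at hx
      exact_mod_cast hx
    · intro a ha
      have hlim : Tendsto (fun x : ℝ => (1 - x) * (φ 0).toReal + x * (φ 1).toReal)
          (𝓝[Set.Ici 0] 0) (𝓝 ((φ 0).toReal)) := by
        have : Continuous (fun x : ℝ => (1 - x) * (φ 0).toReal + x * (φ 1).toReal) := by fun_prop
        have h3 := this.tendsto 0
        simp only [sub_zero, one_mul, zero_mul, add_zero] at h3
        exact h3.mono_left nhdsWithin_le_nhds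
      filter_upwards [hlim.eventually (gt_mem_nhds ha), self_mem_nhdsWithin,
        nhdsWithin_le_nhds (gt_mem_nhds (zero_lt_one' ℝ))] with x hx hx0 hx1
      have hx0' : (0 : ℝ) ≤ x := hx0
      have h4 := hconv.2 (Set.self_mem_Ici (a := (0:ℝ))) (show (1:ℝ) ∈ Set.Ici 0 by simp)
        (by linarith : 0 ≤ 1 - x) hx0' (by ring)
      simp only [smul_eq_mul, mul_zero, zero_add, mul_one] at h4
      exact lt_of_le_of_lt h4 hx
  · exact (hdiff s hs').continuousAt.continuousWithinAt

/-- Real-valued cell objective. -/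
def GJ {W Y : Type*} [Fintype W] [Fintype Y]
    (c : W → Y → ℝ) (ε : ℝ) (f₁ f₂ : ℝ → ℝ)
    (μ : W → ℝ) (ν : Y → ℝ) (νm : Y → ℝ) (π : W → Y → ℝ) : ℝ :=
  (∑ x, ∑ y, c x y * π x y)
    + ε * (∑ x, ∑ y, (π x y * Real.log (π x y / (μ x * ν y)) - π x y + μ x * ν y))
    + (∑ x, μ x * f₁ ((∑ y, π x y) / μ x))
    + ∑ y, ν y * f₂ (((∑ x, π x y) + νm y) / ν y)

lemma divergence_coe {Z : Type*} [Fintype Z] {φ : ℝ → EReal} (h : AssumptionA φ) (ρ σ : Z → ℝ)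
    (hσ : ∀ z, 0 < σ z) (hρ : ∀ z, 0 ≤ ρ z) :
    divergence φ ρ σ = ((∑ z, σ z * (φ (ρ z / σ z)).toReal : ℝ) : EReal) := by
  unfold divergence
  have h2 : (∑ z, if σ z = 0 then ρ z else 0 : ℝ) = 0 :=
    Finset.sum_eq_zero fun z _ => if_neg (hσ z).ne'
  rw [h2, EReal.coe_zero, mul_zero, add_zero, coe_sum_EReal]
  refine Finset.sum_congr rfl fun z _ => ?_
  rw [if_pos (hσ z), EReal.coe_mul, h.coe (div_nonneg (hρ z) (hσ z).le)]

lemma EJfun_coe {W Y : Type*} [Fintype W] [Fintype Y]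
    (c : W → Y → ℝ) (ε : ℝ) {φ₁ φ₂ : ℝ → EReal} (h₁ : AssumptionA φ₁) (h₂ : AssumptionA φ₂)
    (μ : W → ℝ) (ν : Y → ℝ) (νm : Y → ℝ) (π : W → Y → ℝ)
    (hμ : ∀ x, 0 < μ x) (hν : ∀ y, 0 < ν y) (hνm : ∀ y, 0 ≤ νm y) (hπ : ∀ x y, 0 ≤ π x y) :
    EJfun c ε φ₁ φ₂ μ ν νm π
      = ((GJ c ε (fun s => (φ₁ s).toReal) (fun s => (φ₂ s).toReal) μ ν νm π : ℝ) : EReal) := by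
  unfold EJfun
  rw [divergence_coe h₁ _ _ hμ (fun x => Finset.sum_nonneg fun y _ => hπ x y),
    divergence_coe h₂ _ _ hν
      (fun y => add_nonneg (Finset.sum_nonneg fun x _ => hπ x y) (hνm y))]
  unfold KLfin
  rw [if_pos (fun z hz => absurd hz (mul_pos (hμ _) (hν _)).ne'), Fintype.sum_prod_type]
  unfold GJ
  push_cast
  rfl

/-- contribution of the complement of the cell -/
def restJ {X Y : Type*} [Fintype X] [Fintype Y]
    (c : X → Y → ℝ) (ε : ℝ) (f₁ : ℝ → ℝ)
    (μ : X → ℝ) (ν : Y → ℝ) (J : Set X) (π : X → Y → ℝ) : ℝ :=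
  (∑ x : {x // ¬ x ∈ J}, ∑ y, c x y * π x y)
    + ε * (∑ x : {x // ¬ x ∈ J}, ∑ y,
        (π x y * Real.log (π x y / (μ x * ν y)) - π x y + μ x * ν y))
    + (∑ x : {x // ¬ x ∈ J}, μ x * f₁ ((∑ y, π x y) / μ x))

lemma GJ_split {X Y : Type*} [Fintype X] [Fintype Y]
    (c : X → Y → ℝ) (ε : ℝ) (f₁ f₂ : ℝ → ℝ)
    (μ : X → ℝ) (ν : Y → ℝ) (J : Set X) (π : X → Y → ℝ) :
    GJ c ε f₁ f₂ μ ν (fun _ => 0) π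
      = GJ (fun (j : J) y => c j y) ε f₁ f₂ (fun (j : J) => μ j) ν (outMarg J π)
          (fun (j : J) y => π j y) + restJ c ε f₁ μ ν J π := by
  have key : ∀ g : X → ℝ, ∑ x, g x = (∑ x : J, g x) + ∑ x : {x // ¬ x ∈ J}, g x := fun g =>
    (Fintype.sum_subtype_add_sum_subtype (fun x => x ∈ J) g).symm
  have hout : ∀ y, (∑ x : J, π x y) + outMarg J π y = ∑ x, π x y := by
    intro y
    have : outMarg J π y = ∑ x : {x // ¬ x ∈ J}, π x y := by
      unfold outMarg
      rw [key]
      have h1 : (∑ x : J, (Jᶜ).indicator (fun x' => π x' y) (x : X)) = 0 :=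
        Finset.sum_eq_zero fun x _ => by simp
      rw [h1, zero_add]
      refine Finset.sum_congr rfl fun x _ => ?_
      rw [Set.indicator_of_mem]
      exact x.2
    rw [this, key]
  unfold GJ restJ
  simp only [hout, add_zero]
  rw [key (fun x => ∑ y, c x y * π x y), key (fun x => μ x * f₁ ((∑ y, π x y) / μ x)),
    key (fun x => ∑ y, (π x y * Real.log (π x y / (μ x * ν y)) - π x y + μ x * ν y))]
  ring

lemma restJ_congr {X Y : Type*} [Fintype X] [Fintype Y]
    (c : X → Y → ℝ) (ε : ℝ) (f₁ : ℝ → ℝ)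
    (μ : X → ℝ) (ν : Y → ℝ) (J : Set X) (p q : X → Y → ℝ) (h : ∀ x, x ∉ J → p x = q x) :
    restJ c ε f₁ μ ν J p = restJ c ε f₁ μ ν J q := by
  unfold restJ
  have : ∀ x : {x // ¬ x ∈ J}, p x = q x := fun x => h x x.2
  simp only [this]

lemma outMarg_congr {X Y : Type*} [Fintype X]
    (J : Set X) (p q : X → Y → ℝ) (h : ∀ x, x ∉ J → p x = q x) :
    outMarg J p = outMarg J q := by
  funext y
  unfold outMarg
  refine Finset.sum_congr rfl fun x _ => ?_
  by_cases hx : x ∈ J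
  · simp [hx]
  · simp [hx, h x hx]

lemma outMarg_nonneg {X Y : Type*} [Fintype X]
    (J : Set X) (p : X → Y → ℝ) (h : ∀ x y, 0 ≤ p x y) (y : Y) : 0 ≤ outMarg J p y :=
  Finset.sum_nonneg fun x _ => Set.indicator_nonneg (fun x _ => h x y) x

/-- The convex part. -/
def Fc {X Y : Type*} [Fintype X] [Fintype Y]
    (c : X → Y → ℝ) (ε : ℝ) (f₁ f₂ : ℝ → ℝ)
    (μ : X → ℝ) (ν : Y → ℝ) (π : X → Y → ℝ) : ℝ :=
  (∑ x, ∑ y, (c x y * π x y + ε * (μ x * ν y - π x y * Real.log (μ x * ν y) - π x y)))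
    + (∑ x, μ x * f₁ ((∑ y, π x y) / μ x))
    + ∑ y, ν y * f₂ ((∑ x, π x y) / ν y)

/-- The entropy part. -/
def Hh {X Y : Type*} [Fintype X] [Fintype Y] (π : X → Y → ℝ) : ℝ :=
  ∑ x, ∑ y, π x y * Real.log (π x y)

/-- The real-valued objective. -/
def Ff {X Y : Type*} [Fintype X] [Fintype Y]
    (c : X → Y → ℝ) (ε : ℝ) (f₁ f₂ : ℝ → ℝ)
    (μ : X → ℝ) (ν : Y → ℝ) (π : X → Y → ℝ) : ℝ := Fc c ε f₁ f₂ μ ν π + ε * Hh π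

lemma GJ_eq_Ff {X Y : Type*} [Fintype X] [Fintype Y]
    (c : X → Y → ℝ) (ε : ℝ) (f₁ f₂ : ℝ → ℝ)
    (μ : X → ℝ) (ν : Y → ℝ) (hμ : ∀ x, 0 < μ x) (hν : ∀ y, 0 < ν y) (π : X → Y → ℝ) :
    GJ c ε f₁ f₂ μ ν (fun _ => 0) π = Ff c ε f₁ f₂ μ ν π := by
  have h : ∀ x y, π x y * Real.log (π x y / (μ x * ν y))
      = π x y * Real.log (π x y) - π x y * Real.log (μ x * ν y) := by
    intro x y
    by_cases h0 : π x y = 0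
    · simp [h0]
    · rw [Real.log_div h0 (mul_pos (hμ x) (hν y)).ne']; ring
  unfold GJ Ff Fc Hh
  simp only [h, add_zero, Finset.sum_add_distrib, Finset.sum_sub_distrib, ← Finset.mul_sum]
  ring

lemma Fc_convex {X Y : Type*} [Fintype X] [Fintype Y]
    (c : X → Y → ℝ) (ε : ℝ) {f₁ f₂ : ℝ → ℝ} (h₁ : GoodFn f₁) (h₂ : GoodFn f₂)
    (μ : X → ℝ) (ν : Y → ℝ) (hμ : ∀ x, 0 < μ x) (hν : ∀ y, 0 < ν y) :
    ConvexOn ℝ (Set.Ici (0 : X → Y → ℝ)) (Fc c ε f₁ f₂ μ ν) := by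
  refine ⟨convex_Ici 0, ?_⟩
  intro p hp q hq a b ha hb hab
  have hp' : ∀ x y, 0 ≤ p x y := fun x y => hp x y
  have hq' : ∀ x y, 0 ≤ q x y := fun x y => hq x y
  have e1 : ∑ x, ∑ y, (c x y * (a • p + b • q) x y + ε * (μ x * ν y
      - (a • p + b • q) x y * Real.log (μ x * ν y) - (a • p + b • q) x y))
    = a * (∑ x, ∑ y, (c x y * p x y + ε * (μ x * ν y
      - p x y * Real.log (μ x * ν y) - p x y))) +
      b * (∑ x, ∑ y, (c x y * q x y + ε * (μ x * ν y
      - q x y * Real.log (μ x * ν y) - q x y))) := by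
    simp only [Finset.mul_sum, ← Finset.sum_add_distrib]
    refine Finset.sum_congr rfl fun x _ => Finset.sum_congr rfl fun y _ => ?_
    simp only [Pi.add_apply, Pi.smul_apply, smul_eq_mul]
    obtain rfl : b = 1 - a := by linarith
    ring
  have e2 : ∑ x, μ x * f₁ ((∑ y, (a • p + b • q) x y) / μ x)
      ≤ a * (∑ x, μ x * f₁ ((∑ y, p x y) / μ x)) + b * (∑ x, μ x * f₁ ((∑ y, q x y) / μ x)) := by
    simp only [Finset.mul_sum, ← Finset.sum_add_distrib]
    refine Finset.sum_le_sum fun x _ => ?_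
    have h := h₁.1.2 (x := (∑ y, p x y) / μ x) (y := (∑ y, q x y) / μ x)
      (div_nonneg (Finset.sum_nonneg fun y _ => hp' x y) (hμ x).le)
      (div_nonneg (Finset.sum_nonneg fun y _ => hq' x y) (hμ x).le) ha hb hab
    have e : (∑ y, (a • p + b • q) x y) / μ x
        = a • ((∑ y, p x y) / μ x) + b • ((∑ y, q x y) / μ x) := by
      simp only [Pi.add_apply, Pi.smul_apply, smul_eq_mul, Finset.sum_add_distrib,
        ← Finset.mul_sum]
      ring
    rw [e]
    have := mul_le_mul_of_nonneg_left h (hμ x).le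
    simp only [smul_eq_mul] at this ⊢
    linarith
  have e3 : ∑ y, ν y * f₂ ((∑ x, (a • p + b • q) x y) / ν y)
      ≤ a * (∑ y, ν y * f₂ ((∑ x, p x y) / ν y)) + b * (∑ y, ν y * f₂ ((∑ x, q x y) / ν y)) := by
    simp only [Finset.mul_sum, ← Finset.sum_add_distrib]
    refine Finset.sum_le_sum fun y _ => ?_
    have h := h₂.1.2 (x := (∑ x, p x y) / ν y) (y := (∑ x, q x y) / ν y)
      (div_nonneg (Finset.sum_nonneg fun x _ => hp' x y) (hν y).le)
      (div_nonneg (Finset.sum_nonneg fun x _ => hq' x y) (hν y).le) ha hb hab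
    have e : (∑ x, (a • p + b • q) x y) / ν y
        = a • ((∑ x, p x y) / ν y) + b • ((∑ x, q x y) / ν y) := by
      simp only [Pi.add_apply, Pi.smul_apply, smul_eq_mul, Finset.sum_add_distrib,
        ← Finset.mul_sum]
      ring
    rw [e]
    have := mul_le_mul_of_nonneg_left h (hν y).le
    simp only [smul_eq_mul] at this ⊢
    linarith
  unfold Fc
  rw [e1]
  simp only [smul_eq_mul]
  linarith

lemma Hh_strictConvex {X Y : Type*} [Fintype X] [Fintype Y] :
    StrictConvexOn ℝ (Set.Ici (0 : X → Y → ℝ)) Hh := by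
  refine ⟨convex_Ici 0, ?_⟩
  intro p hp q hq hpq a b ha hb hab
  have hle : ∀ x y, (a • p + b • q) x y * Real.log ((a • p + b • q) x y)
      ≤ a * (p x y * Real.log (p x y)) + b * (q x y * Real.log (q x y)) := fun x y =>
    Real.strictConvexOn_mul_log.convexOn.2 (hp x y) (hq x y) ha.le hb.le hab
  unfold Hh
  simp only [smul_eq_mul, Finset.mul_sum, ← Finset.sum_add_distrib]
  obtain ⟨x, hx⟩ := Function.ne_iff.1 hpq
  obtain ⟨y, hy⟩ := Function.ne_iff.1 hx
  refine Finset.sum_lt_sum (fun x _ => Finset.sum_le_sum fun y _ => hle x y)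
    ⟨x, Finset.mem_univ _, Finset.sum_lt_sum (fun y _ => hle x y) ⟨y, Finset.mem_univ _, ?_⟩⟩
  exact Real.strictConvexOn_mul_log.2 (hp x y) (hq x y) hy ha hb hab

lemma Ff_strictConvex {X Y : Type*} [Fintype X] [Fintype Y]
    (c : X → Y → ℝ) (ε : ℝ) (hε : 0 < ε) {f₁ f₂ : ℝ → ℝ} (h₁ : GoodFn f₁) (h₂ : GoodFn f₂)
    (μ : X → ℝ) (ν : Y → ℝ) (hμ : ∀ x, 0 < μ x) (hν : ∀ y, 0 < ν y) :
    StrictConvexOn ℝ (Set.Ici (0 : X → Y → ℝ)) (Ff c ε f₁ f₂ μ ν) := by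
  refine ⟨convex_Ici 0, ?_⟩
  intro p hp q hq hpq a b ha hb hab
  have e1 := (Fc_convex c ε h₁ h₂ μ ν hμ hν).2 hp hq ha.le hb.le hab
  have e2 := mul_lt_mul_of_pos_left (Hh_strictConvex.2 hp hq hpq ha hb hab) hε
  unfold Ff
  simp only [smul_eq_mul] at *
  linarith

lemma Ff_cont {X Y : Type*} [Fintype X] [Fintype Y]
    (c : X → Y → ℝ) (ε : ℝ) {f₁ f₂ : ℝ → ℝ} (h₁ : GoodFn f₁) (h₂ : GoodFn f₂)
    (μ : X → ℝ) (ν : Y → ℝ) (hμ : ∀ x, 0 < μ x) (hν : ∀ y, 0 < ν y) :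
    ContinuousOn (Ff c ε f₁ f₂ μ ν) (Set.Ici (0 : X → Y → ℝ)) := by
  unfold Ff Fc Hh
  have hl : ∀ x y, Continuous (fun p : X → Y → ℝ => p x y * Real.log (p x y)) := fun x y =>
    Real.continuous_mul_log.comp (by fun_prop)
  refine ContinuousOn.add (ContinuousOn.add (ContinuousOn.add ?_ ?_) ?_) ?_
  · exact Continuous.continuousOn (by fun_prop)
  · refine continuousOn_finsetSum _ fun x _ => continuousOn_const.mul ?_
    refine h₁.2.1.comp (t := Set.Ici 0) (Continuous.continuousOn (by fun_prop)) ?_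
    intro p hp
    exact div_nonneg (Finset.sum_nonneg fun y _ => hp x y) (hμ x).le
  · refine continuousOn_finsetSum _ fun y _ => continuousOn_const.mul ?_
    refine h₂.2.1.comp (t := Set.Ici 0) (Continuous.continuousOn (by fun_prop)) ?_
    intro p hp
    exact div_nonneg (Finset.sum_nonneg fun x _ => hp x y) (hν y).le
  · exact Continuous.continuousOn (by fun_prop)

lemma Ff_diff {X Y : Type*} [Fintype X] [Fintype Y] [Nonempty X] [Nonempty Y]
    (c : X → Y → ℝ) (ε : ℝ) {f₁ f₂ : ℝ → ℝ} (h₁ : GoodFn f₁) (h₂ : GoodFn f₂)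
    (μ : X → ℝ) (ν : Y → ℝ) (hμ : ∀ x, 0 < μ x) (hν : ∀ y, 0 < ν y)
    (p : X → Y → ℝ) (hp : ∀ x y, 0 < p x y) :
    DifferentiableAt ℝ (Ff c ε f₁ f₂ μ ν) p := by
  have hl : ∀ x y, DifferentiableAt ℝ (fun p : X → Y → ℝ => p x y * Real.log (p x y)) p :=
    fun x y => by
      have h0 : DifferentiableAt ℝ (fun p : X → Y → ℝ => p x y) p := by fun_prop
      exact h0.mul (h0.log (hp x y).ne')
  have hA : ∀ x, DifferentiableAt ℝ (fun p : X → Y → ℝ => f₁ ((∑ y, p x y) / μ x)) p := by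
    intro x
    have hpos : 0 < (∑ y, p x y) / μ x :=
      div_pos (Finset.sum_pos (fun y _ => hp x y) Finset.univ_nonempty) (hμ x)
    exact DifferentiableAt.comp (g := f₁) (f := fun p : X → Y → ℝ => (∑ y, p x y) / μ x) p
      (h₁.2.2.2 _ hpos) (by fun_prop)
  have hB : ∀ y, DifferentiableAt ℝ (fun p : X → Y → ℝ => f₂ ((∑ x, p x y) / ν y)) p := by
    intro y
    have hpos : 0 < (∑ x, p x y) / ν y :=
      div_pos (Finset.sum_pos (fun x _ => hp x y) Finset.univ_nonempty) (hν y)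
    exact DifferentiableAt.comp (g := f₂) (f := fun p : X → Y → ℝ => (∑ x, p x y) / ν y) p
      (h₂.2.2.2 _ hpos) (by fun_prop)
  unfold Ff Fc Hh
  refine DifferentiableAt.fun_add (DifferentiableAt.fun_add (DifferentiableAt.fun_add ?_ ?_) ?_)
    (DifferentiableAt.const_mul ?_ _)
  · fun_prop
  · exact DifferentiableAt.fun_sum fun x _ => (hA x).const_mul _
  · exact DifferentiableAt.fun_sum fun y _ => (hB y).const_mul _
  · exact DifferentiableAt.fun_sum fun x _ => DifferentiableAt.fun_sum fun y _ => hl x y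

lemma mul_log_lower (A t : ℝ) (ht : 0 ≤ t) : A * t - Real.exp (A - 1) ≤ t * Real.log t := by
  rcases ht.eq_or_lt with rfl | ht
  · simp [Real.exp_nonneg]
  · have h := Real.log_le_sub_one_of_pos (div_pos (Real.exp_pos (A - 1)) ht)
    rw [Real.log_div (Real.exp_pos _).ne' ht.ne', Real.log_exp] at h
    have h2 := mul_le_mul_of_nonneg_left h ht.le
    have h3 : t * (Real.exp (A - 1) / t - 1) = Real.exp (A - 1) - t := by field_simp
    rw [h3] at h2
    linarith

lemma Ff_lower {X Y : Type*} [Fintype X] [Fintype Y]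
    (c : X → Y → ℝ) (ε : ℝ) (hε : 0 < ε) {f₁ f₂ : ℝ → ℝ} (h₁ : GoodFn f₁) (h₂ : GoodFn f₂)
    (μ : X → ℝ) (ν : Y → ℝ) (hμ : ∀ x, 0 < μ x) (hν : ∀ y, 0 < ν y) :
    ∃ C : ℝ, ∀ p : X → Y → ℝ, (∀ x y, 0 ≤ p x y) →
      (∑ x, ∑ y, p x y) ≤ Ff c ε f₁ f₂ μ ν p + C := by
  refine ⟨∑ x, ∑ y, (ε * Real.exp ((1 - c x y) / ε + Real.log (μ x * ν y) + 1 - 1)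
    - ε * (μ x * ν y)), fun p hp => ?_⟩
  have e1 : 0 ≤ ∑ x, μ x * f₁ ((∑ y, p x y) / μ x) :=
    Finset.sum_nonneg fun x _ => mul_nonneg (hμ x).le
      (h₁.2.2.1 _ (div_nonneg (Finset.sum_nonneg fun y _ => hp x y) (hμ x).le))
  have e2 : 0 ≤ ∑ y, ν y * f₂ ((∑ x, p x y) / ν y) :=
    Finset.sum_nonneg fun y _ => mul_nonneg (hν y).le
      (h₂.2.2.1 _ (div_nonneg (Finset.sum_nonneg fun x _ => hp x y) (hν y).le))
  have e3 : (∑ x, ∑ y, p x y) ≤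
      (∑ x, ∑ y, (c x y * p x y + ε * (μ x * ν y - p x y * Real.log (μ x * ν y) - p x y)))
      + ε * (∑ x, ∑ y, p x y * Real.log (p x y))
      + ∑ x, ∑ y, (ε * Real.exp ((1 - c x y) / ε + Real.log (μ x * ν y) + 1 - 1)
    - ε * (μ x * ν y)) := by
    simp only [Finset.mul_sum, ← Finset.sum_add_distrib]
    refine Finset.sum_le_sum fun x _ => Finset.sum_le_sum fun y _ => ?_
    have h := mul_le_mul_of_nonneg_left
      (mul_log_lower ((1 - c x y) / ε + Real.log (μ x * ν y) + 1) _ (hp x y)) hε.le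
    have h3 : ε * (((1 - c x y) / ε + Real.log (μ x * ν y) + 1) * p x y
      - Real.exp ((1 - c x y) / ε + Real.log (μ x * ν y) + 1 - 1)) =
      (1 - c x y) * p x y + ε * Real.log (μ x * ν y) * p x y + ε * p x y
      - ε * Real.exp ((1 - c x y) / ε + Real.log (μ x * ν y) + 1 - 1) := by
      field_simp
    rw [h3] at h
    linarith
  unfold Ff Fc Hh
  linarith

/-- unit coordinate plan -/
def ee {X Y : Type*} (x : X) (y : Y) : X → Y → ℝ := fun x' y' => if x' = x ∧ y' = y then 1 else 0

lemma sum_ee {X Y : Type*} [Fintype X] [Fintype Y] (v : X → Y → ℝ) :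
    v = ∑ x, ∑ y, v x y • ee x y := by
  funext a b
  simp only [Finset.sum_apply, Pi.smul_apply, ee, smul_eq_mul, mul_ite, mul_one, mul_zero]
  rw [Finset.sum_eq_single a, Finset.sum_eq_single b]
  · simp
  · intro y _ hy; simp [hy.symm]
  · simp
  · intro x _ hx; simp [hx.symm]
  · simp

lemma coord_pos {X Y : Type*} [Fintype X] [Fintype Y]
    (c : X → Y → ℝ) (ε : ℝ) (hε : 0 < ε) {f₁ f₂ : ℝ → ℝ} (h₁ : GoodFn f₁) (h₂ : GoodFn f₂)
    (μ : X → ℝ) (ν : Y → ℝ) (hμ : ∀ x, 0 < μ x) (hν : ∀ y, 0 < ν y)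
    (p : X → Y → ℝ) (hp : ∀ x y, 0 ≤ p x y)
    (hmin : ∀ x y s, 0 ≤ s →
      Ff c ε f₁ f₂ μ ν p ≤ Ff c ε f₁ f₂ μ ν (p + (s - p x y) • ee x y)) (x : X) (y : Y) :
    0 < p x y := by
  by_contra hcon
  have h0 : p x y = 0 := le_antisymm (not_lt.1 hcon) (hp x y)
  set D := Fc c ε f₁ f₂ μ ν (p + ee x y) - Fc c ε f₁ f₂ μ ν p with hD
  set t := Real.exp (-(|D| + 1) / ε) with ht
  have htpos : 0 < t := Real.exp_pos _
  have ht1 : t ≤ 1 := by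
    rw [ht, Real.exp_le_one_iff]
    exact div_nonpos_of_nonpos_of_nonneg (by linarith [abs_nonneg D]) hε.le
  have hlog : ε * Real.log t = -(|D| + 1) := by
    rw [ht, Real.log_exp]; field_simp
  have hm := hmin x y t htpos.le
  rw [h0, sub_zero] at hm
  have hee : ∀ a b, 0 ≤ (ee x y : X → Y → ℝ) a b := fun a b => by
    unfold ee; split_ifs <;> norm_num
  have hconv : Fc c ε f₁ f₂ μ ν (p + t • ee x y) ≤ Fc c ε f₁ f₂ μ ν p + t * D := by
    have h := (Fc_convex c ε h₁ h₂ μ ν hμ hν).2 (x := p) (y := p + ee x y)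
      (fun a b => hp a b) (fun a b => add_nonneg (hp a b) (hee a b))
      (by linarith : 0 ≤ 1 - t) htpos.le (by ring)
    have e : (1 - t) • p + t • (p + ee x y) = p + t • ee x y := by
      rw [smul_add, sub_smul, one_smul]; abel
    rw [e] at h
    simp only [smul_eq_mul] at h
    rw [hD]; linarith
  have hH : Hh (p + t • ee x y) = Hh p + t * Real.log t := by
    have : ∀ a b, (p + t • ee x y) a b * Real.log ((p + t • ee x y) a b)
        = p a b * Real.log (p a b) + (t * Real.log t) * ee x y a b := by
      intro a b
      by_cases hab : a = x ∧ b = y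
      · obtain ⟨rfl, rfl⟩ := hab
        simp [ee, h0]
      · simp [ee, hab]
    unfold Hh
    simp only [this, Finset.sum_add_distrib]
    congr 1
    rw [Finset.sum_eq_single x, Finset.sum_eq_single y]
    · simp [ee]
    · intro b _ hb; simp [ee, hb]
    · simp
    · intro a _ ha; simp [ee, ha]
    · simp
  unfold Ff at hm
  rw [hH] at hm
  have h5 : 0 ≤ t * (D + ε * Real.log t) := by linarith
  have h6 := nonneg_of_mul_nonneg_right h5 htpos
  rw [hlog] at h6
  linarith [le_abs_self D]

lemma coord_global {X Y : Type*} [Fintype X] [Fintype Y] [Nonempty X] [Nonempty Y]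
    (c : X → Y → ℝ) (ε : ℝ) (hε : 0 < ε) {f₁ f₂ : ℝ → ℝ} (h₁ : GoodFn f₁) (h₂ : GoodFn f₂)
    (μ : X → ℝ) (ν : Y → ℝ) (hμ : ∀ x, 0 < μ x) (hν : ∀ y, 0 < ν y)
    (p : X → Y → ℝ) (hp : ∀ x y, 0 ≤ p x y)
    (hmin : ∀ x y s, 0 ≤ s →
      Ff c ε f₁ f₂ μ ν p ≤ Ff c ε f₁ f₂ μ ν (p + (s - p x y) • ee x y))
    (q : X → Y → ℝ) (hq : ∀ x y, 0 ≤ q x y) :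
    Ff c ε f₁ f₂ μ ν p ≤ Ff c ε f₁ f₂ μ ν q := by
  have hpos := coord_pos c ε hε h₁ h₂ μ ν hμ hν p hp hmin
  have hd := Ff_diff c ε h₁ h₂ μ ν hμ hν p hpos
  have hline : ∀ v : X → Y → ℝ, HasDerivAt (fun t : ℝ => Ff c ε f₁ f₂ μ ν (p + t • v))
      (fderiv ℝ (Ff c ε f₁ f₂ μ ν) p v) 0 := fun v => by
    have := hd.hasFDerivAt.hasLineDerivAt v
    exact this
  have hz : ∀ x y, fderiv ℝ (Ff c ε f₁ f₂ μ ν) p (ee x y) = 0 := by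
    intro x y
    refine IsLocalMin.hasDerivAt_eq_zero ?_ (hline (ee x y))
    filter_upwards [lt_mem_nhds (neg_lt_zero.2 (hpos x y))] with t ht
    have := hmin x y (p x y + t) (by linarith)
    simpa using this
  have hz' : fderiv ℝ (Ff c ε f₁ f₂ μ ν) p (q - p) = 0 := by
    rw [sum_ee (q - p), map_sum]
    refine Finset.sum_eq_zero fun x _ => ?_
    rw [map_sum]
    refine Finset.sum_eq_zero fun y _ => ?_
    rw [map_smul, hz, smul_zero]
  have hder := hline (q - p)
  rw [hz'] at hder
  have hlim := hder.tendsto_slope_zero_right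
  have hle : ∀ᶠ t : ℝ in 𝓝[>] 0, t⁻¹ • (Ff c ε f₁ f₂ μ ν (p + (0 + t) • (q - p))
      - Ff c ε f₁ f₂ μ ν (p + (0 : ℝ) • (q - p))) ≤ Ff c ε f₁ f₂ μ ν q - Ff c ε f₁ f₂ μ ν p := by
    filter_upwards [self_mem_nhdsWithin, nhdsWithin_le_nhds (gt_mem_nhds (zero_lt_one' ℝ))]
      with t ht0 ht1
    have ht0' : 0 < t := ht0
    have h := (Ff_strictConvex c ε hε h₁ h₂ μ ν hμ hν).convexOn.2 (x := p) (y := q)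
      (fun a b => hp a b) (fun a b => hq a b)
      (by linarith : 0 ≤ 1 - t) ht0'.le (by ring)
    have e : (1 - t) • p + t • q = p + (0 + t) • (q - p) := by
      rw [zero_add, smul_sub, sub_smul, one_smul]; abel
    rw [e] at h
    simp only [smul_eq_mul] at h
    rw [zero_smul, add_zero, smul_eq_mul, inv_mul_le_iff₀ ht0']
    linarith
  have := le_of_tendsto hlim hle
  linarith

lemma step_key {X Y : Type*} [Fintype X] [Fintype Y] [Nonempty X]
    (μ : X → ℝ) (ν : Y → ℝ) (hμ : ∀ x, 0 < μ x) (hν : ∀ y, 0 < ν y)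
    (c : X → Y → ℝ) (ε : ℝ) (hε : 0 < ε)
    (φ₁ φ₂ : ℝ → EReal) (h₁ : AssumptionA φ₁) (h₂ : AssumptionA φ₂)
    {n : ℕ} (J : Fin n → Set X) (hJ : IsFinPartition J)
    (S : Fin n → (X → Y → ℝ) → (X → Y → ℝ))
    (hS : IsSolveMap c ε φ₁ φ₂ μ ν J S)
    (Θ : (Fin n → X → Y → ℝ) → (Fin n → X → Y → ℝ) → Fin n → ℝ)
    (hΘ : IsSwiftRule c ε φ₁ φ₂ μ ν Θ ∨ IsOptRule c ε φ₁ φ₂ μ ν Θ)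
    (p : X → Y → ℝ) (hp : ∀ x y, 0 ≤ p x y) :
    (∀ x y, 0 ≤ parUpdate J S Θ p x y) ∧
    Ff c ε (fun s => (φ₁ s).toReal) (fun s => (φ₂ s).toReal) μ ν (parUpdate J S Θ p)
      ≤ Ff c ε (fun s => (φ₁ s).toReal) (fun s => (φ₂ s).toReal) μ ν p ∧
    ∀ x y s, 0 ≤ s →
      Ff c ε (fun s => (φ₁ s).toReal) (fun s => (φ₂ s).toReal) μ ν p
        - Ff c ε (fun s => (φ₁ s).toReal) (fun s => (φ₂ s).toReal) μ ν (p + (s - p x y) • ee x y)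
      ≤ n * (Ff c ε (fun s => (φ₁ s).toReal) (fun s => (φ₂ s).toReal) μ ν p
        - Ff c ε (fun s => (φ₁ s).toReal) (fun s => (φ₂ s).toReal) μ ν (parUpdate J S Θ p)) := by
  set F := Ff c ε (fun s => (φ₁ s).toReal) (fun s => (φ₂ s).toReal) μ ν with hF
  have hE : ∀ q : X → Y → ℝ, (∀ x y, 0 ≤ q x y) → Eglobal c ε φ₁ φ₂ μ ν q = (F q : EReal) := by
    intro q hq
    rw [Eglobal, EJfun_coe c ε h₁ h₂ μ ν _ q hμ hν (fun _ => le_rfl) hq, GJ_eq_Ff _ _ _ _ _ _ hμ hν]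
  have hcover : ∀ x, ∃ i, x ∈ J i := fun x => by
    have : x ∈ ⋃ i, J i := by rw [hJ.2.1]; trivial
    simpa using this
  have hn : 0 < n := by
    obtain ⟨x⟩ := (inferInstance : Nonempty X)
    obtain ⟨i, _⟩ := hcover x
    exact i.pos
  have hn' : (0 : ℝ) < n := by exact_mod_cast hn
  have hn1 : (1 : ℝ) ≤ n := by exact_mod_cast hn
  -- the weights lie in [0,1]
  have hu : ∀ i : Fin n, (fun _ : Fin n => 1 / (n : ℝ)) i ∈ Set.Icc (0 : ℝ) 1 := fun i =>
    ⟨by positivity, by rw [div_le_one hn']; exact hn1⟩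
  have hcell : ∀ i x y, 0 ≤ cellRestr (J i) p x y := fun i x y =>
    Set.indicator_nonneg (fun x _ => hp x y) x
  have hSn : ∀ i x y, 0 ≤ S i p x y := fun i => (hS i p hp).1
  have hcomb : ∀ θ : Fin n → ℝ, (∀ i, θ i ∈ Set.Icc (0 : ℝ) 1) → ∀ x y,
      0 ≤ combPlan (fun i => cellRestr (J i) p) (fun i => S i p) θ x y := fun θ hθ x y =>
    Finset.sum_nonneg fun i _ => add_nonneg
      (mul_nonneg (by linarith [(hθ i).2]) (hcell i x y)) (mul_nonneg (hθ i).1 (hSn i x y))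
  have hw : ∀ i, Θ (fun i => cellRestr (J i) p) (fun i => S i p) i ∈ Set.Icc (0 : ℝ) 1 := by
    rcases hΘ with h | h
    · rcases (h (fun i => cellRestr (J i) p) (fun i => S i p)).1 with h' | h' <;> rw [h']
      · exact hu
      · intro i; simp
    · exact (h _ _).1
  have hnn : ∀ x y, 0 ≤ parUpdate J S Θ p x y := hcomb _ hw
  have hlec : F (parUpdate J S Θ p)
      ≤ F (combPlan (fun i => cellRestr (J i) p) (fun i => S i p) (fun _ => 1 / (n : ℝ))) := by
    have : Eglobal c ε φ₁ φ₂ μ ν (parUpdate J S Θ p) ≤ Eglobal c ε φ₁ φ₂ μ ν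
        (combPlan (fun i => cellRestr (J i) p) (fun i => S i p) (fun _ => 1 / (n : ℝ))) := by
      rcases hΘ with h | h
      · exact (h _ _).2.1
      · exact (h _ _).2 _ hu
    rw [hE _ hnn, hE _ (hcomb _ hu)] at this
    exact_mod_cast this
  -- replaced plans
  let r : Fin n → X → Y → ℝ := fun i x y => if x ∈ J i then S i p x y else p x y
  have hr : ∀ i x y, 0 ≤ r i x y := fun i x y => by
    simp only [r]; split_ifs
    · exact hSn i x y
    · exact hp x y
  have hre : ∀ i x y, r i x y = p x y + (S i p x y - cellRestr (J i) p x y) := fun i x y => by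
    simp only [r, cellRestr]
    split_ifs with h
    · rw [Set.indicator_of_mem h]; ring
    · rw [Set.indicator_of_notMem h, (hS i p hp).2.1 x h y]; ring
  have hrmin : ∀ i (q : X → Y → ℝ), (∀ x y, 0 ≤ q x y) → (∀ x, x ∉ J i → q x = p x) →
      F (r i) ≤ F q := by
    intro i q hq hqp
    have hrp : ∀ x, x ∉ J i → r i x = p x := fun x hx => by funext y; simp [r, hx]
    have h := (hS i p hp).2.2 (fun j y => q j y) (fun j y => hq j y)
    rw [EJfun_coe (fun (j : J i) y => c j y) ε h₁ h₂ (fun (j : J i) => μ j) ν (outMarg (J i) p)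
        (fun (j : J i) y => S i p j y) (fun j => hμ j) hν (outMarg_nonneg _ p hp)
        (fun j y => hSn i j y),
      EJfun_coe (fun (j : J i) y => c j y) ε h₁ h₂ (fun (j : J i) => μ j) ν (outMarg (J i) p)
        (fun (j : J i) y => q j y) (fun j => hμ j) hν (outMarg_nonneg _ p hp)
        (fun j y => hq j y), EReal.coe_le_coe_iff] at h
    have er : (fun (j : J i) y => S i p j y) = fun (j : J i) y => r i j y := by
      funext j y; simp [r]
    rw [er] at h
    rw [hF, ← GJ_eq_Ff _ _ _ _ _ _ hμ hν, ← GJ_eq_Ff _ _ _ _ _ _ hμ hν,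
      GJ_split _ _ _ _ _ _ (J i) (r i), GJ_split _ _ _ _ _ _ (J i) q,
      outMarg_congr (J i) _ _ hrp, outMarg_congr (J i) _ _ hqp,
      restJ_congr _ _ _ _ _ (J i) _ _ hrp, restJ_congr _ _ _ _ _ (J i) _ _ hqp]
    linarith
  have hsumcell : ∀ x y, ∑ i, cellRestr (J i) p x y = p x y := by
    intro x y
    obtain ⟨i, hi⟩ := hcover x
    rw [Finset.sum_eq_single i]
    · simp [cellRestr, hi]
    · intro j _ hj
      have : x ∉ J j := fun hxj => Set.disjoint_left.1 (hJ.2.2 j i hj) hxj hi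
      simp [cellRestr, this]
    · simp
  have hcr : combPlan (fun i => cellRestr (J i) p) (fun i => S i p) (fun _ => 1 / (n : ℝ))
      = ∑ i, (1 / (n : ℝ)) • r i := by
    funext x y
    simp only [combPlan, Finset.sum_apply, Pi.smul_apply, smul_eq_mul, hre]
    have e1 : ∀ i, (1 - 1 / (n : ℝ)) * cellRestr (J i) p x y + 1 / (n : ℝ) * S i p x y
      = cellRestr (J i) p x y + 1 / (n : ℝ) * (S i p x y - cellRestr (J i) p x y) := fun i => by ring
    simp only [e1, Finset.sum_add_distrib, mul_add, hsumcell]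
    congr 1
    simp
    field_simp
  have hjensen : n * F (parUpdate J S Θ p) ≤ ∑ i, F (r i) := by
    have hc := (Ff_strictConvex c ε hε h₁.good h₂.good μ ν hμ hν).convexOn
    have := hc.map_sum_le (t := Finset.univ) (w := fun _ : Fin n => 1 / (n : ℝ)) (p := r)
      (fun _ _ => by positivity) (by simp; field_simp) (fun i _ => fun x y => hr i x y)
    rw [← hcr] at this
    simp only [smul_eq_mul, ← Finset.mul_sum] at this
    have h3 := hlec.trans this
    have h4 := mul_le_mul_of_nonneg_left h3 hn'.le
    rwa [← mul_assoc, mul_one_div_cancel hn'.ne', one_mul] at h4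
  have hmain : ∀ i (q : X → Y → ℝ), (∀ x y, 0 ≤ q x y) → (∀ x, x ∉ J i → q x = p x) →
      F p - F q ≤ n * (F p - F (parUpdate J S Θ p)) := by
    intro i q hq hqp
    have h1 : ∑ j, (F p - F (r j)) ≥ F p - F (r i) :=
      Finset.single_le_sum (f := fun j => F p - F (r j))
        (fun j _ => sub_nonneg.2 (hrmin j p hp (fun _ _ => rfl))) (Finset.mem_univ i)
    simp only [Finset.sum_sub_distrib, Finset.sum_const, Finset.card_univ, Fintype.card_fin,
      nsmul_eq_mul] at h1
    have h2 := hrmin i q hq hqp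
    linarith
  refine ⟨hnn, ?_, ?_⟩
  · have := hmain ⟨0, hn⟩ p hp (fun _ _ => rfl)
    rw [sub_self] at this
    exact sub_nonneg.1 (nonneg_of_mul_nonneg_right this hn')
  · intro x y s hs
    obtain ⟨i, hi⟩ := hcover x
    refine hmain i _ ?_ ?_
    · intro a b
      by_cases hab : a = x ∧ b = y
      · obtain ⟨rfl, rfl⟩ := hab
        simpa [ee] using hs
      · simpa [ee, hab] using hp a b
    · intro a ha
      have : a ≠ x := fun h => ha (h ▸ hi)
      funext b
      simp [ee, this]

/-- parallel domain decomposition with the "swift" or the "opt"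
weight rule converges pointwise to the unique global minimizer of `E`. -/
theorem parallel_domdec_converges_swift_and_opt
    {X Y : Type*} [Fintype X] [Fintype Y] [Nonempty X] [Nonempty Y]
    (μ : X → ℝ) (ν : Y → ℝ) (hμ : ∀ x, 0 < μ x) (hν : ∀ y, 0 < ν y)
    (c : X → Y → ℝ) (ε : ℝ) (hε : 0 < ε)
    (φ₁ φ₂ : ℝ → EReal) (h₁ : AssumptionA φ₁) (h₂ : AssumptionA φ₂)
    {nA nB : ℕ} (JA : Fin nA → Set X) (JB : Fin nB → Set X)
    (hJA : IsFinPartition JA) (hJB : IsFinPartition JB)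
    (SA : Fin nA → (X → Y → ℝ) → (X → Y → ℝ))
    (SB : Fin nB → (X → Y → ℝ) → (X → Y → ℝ))
    (hSA : IsSolveMap c ε φ₁ φ₂ μ ν JA SA)
    (hSB : IsSolveMap c ε φ₁ φ₂ μ ν JB SB)
    (ΘA : (Fin nA → X → Y → ℝ) → (Fin nA → X → Y → ℝ) → Fin nA → ℝ)
    (ΘB : (Fin nB → X → Y → ℝ) → (Fin nB → X → Y → ℝ) → Fin nB → ℝ)
    (hΘA : IsSwiftRule c ε φ₁ φ₂ μ ν ΘA ∨ IsOptRule c ε φ₁ φ₂ μ ν ΘA)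
    (hΘB : IsSwiftRule c ε φ₁ φ₂ μ ν ΘB ∨ IsOptRule c ε φ₁ φ₂ μ ν ΘB)
    (π0 : X → Y → ℝ) (hπ0 : ∀ x y, 0 ≤ π0 x y)
    (hfin : Eglobal c ε φ₁ φ₂ μ ν π0 ≠ ⊤)
    (iter : ℕ → X → Y → ℝ) (hiter0 : iter 0 = π0)
    (hiterS : ∀ k : ℕ, iter (k + 1) =
      if (k + 1) % 2 = 1 then parUpdate JA SA ΘA (iter k)
      else parUpdate JB SB ΘB (iter k)) :
    ∃ πopt : X → Y → ℝ, (∀ x y, 0 ≤ πopt x y) ∧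
      (∀ π' : X → Y → ℝ, (∀ x y, 0 ≤ π' x y) →
          Eglobal c ε φ₁ φ₂ μ ν πopt ≤ Eglobal c ε φ₁ φ₂ μ ν π') ∧
      (∀ π' : X → Y → ℝ, (∀ x y, 0 ≤ π' x y) →
          (∀ π'' : X → Y → ℝ, (∀ x y, 0 ≤ π'' x y) →
            Eglobal c ε φ₁ φ₂ μ ν π' ≤ Eglobal c ε φ₁ φ₂ μ ν π'') →
          π' = πopt) ∧
      ∀ x y, Filter.Tendsto (fun k => iter k x y) Filter.atTop (nhds (πopt x y)) := by
  set F := Ff c ε (fun s => (φ₁ s).toReal) (fun s => (φ₂ s).toReal) μ ν with hF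
  have hE : ∀ q : X → Y → ℝ, (∀ x y, 0 ≤ q x y) → Eglobal c ε φ₁ φ₂ μ ν q = (F q : EReal) := by
    intro q hq
    rw [Eglobal, EJfun_coe c ε h₁ h₂ μ ν _ q hμ hν (fun _ => le_rfl) hq, GJ_eq_Ff _ _ _ _ _ _ hμ hν]
  have keyA := step_key μ ν hμ hν c ε hε φ₁ φ₂ h₁ h₂ JA hJA SA hSA ΘA hΘA
  have keyB := step_key μ ν hμ hν c ε hε φ₁ φ₂ h₁ h₂ JB hJB SB hSB ΘB hΘB
  rw [← hF] at keyA keyB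
  have hstep : ∀ k, (∀ x y, 0 ≤ iter k x y) → (∀ x y, 0 ≤ iter (k + 1) x y) ∧
      F (iter (k + 1)) ≤ F (iter k) ∧ ∀ x y s, 0 ≤ s →
      F (iter k) - F (iter k + (s - iter k x y) • ee x y)
        ≤ ((nA : ℝ) + nB) * (F (iter k) - F (iter (k + 1))) := by
    intro k hk
    rw [hiterS k]
    split_ifs
    · obtain ⟨a1, a2, a3⟩ := keyA (iter k) hk
      refine ⟨a1, a2, fun x y s hs => (a3 x y s hs).trans ?_⟩
      exact mul_le_mul_of_nonneg_right (by simp) (sub_nonneg.2 a2)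
    · obtain ⟨a1, a2, a3⟩ := keyB (iter k) hk
      refine ⟨a1, a2, fun x y s hs => (a3 x y s hs).trans ?_⟩
      exact mul_le_mul_of_nonneg_right (by simp) (sub_nonneg.2 a2)
  have hnn : ∀ k x y, 0 ≤ iter k x y := by
    intro k
    induction k with
    | zero => rw [hiter0]; exact hπ0
    | succ k ih => exact (hstep k ih).1
  have hanti : Antitone (fun k => F (iter k)) :=
    antitone_nat_of_succ_le fun k => (hstep k (hnn k)).2.1
  obtain ⟨C, hC⟩ := Ff_lower c ε hε h₁.good h₂.good μ ν hμ hν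
  have hbdd : BddBelow (Set.range fun k => F (iter k)) := by
    refine ⟨-C, ?_⟩
    rintro _ ⟨k, rfl⟩
    have h1 := hC (iter k) (hnn k)
    have h2 : 0 ≤ ∑ x, ∑ y, iter k x y :=
      Finset.sum_nonneg fun x _ => Finset.sum_nonneg fun y _ => hnn k x y
    show -C ≤ F (iter k)
    linarith
  have hconv := tendsto_atTop_ciInf hanti hbdd
  have hgap : Tendsto (fun k => ((nA : ℝ) + nB) * (F (iter k) - F (iter (k + 1)))) atTop (𝓝 0) := by
    have := (hconv.sub (hconv.comp (tendsto_add_atTop_nat 1))).const_mul ((nA : ℝ) + nB)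
    simpa using this
  set R := F (iter 0) + C with hR
  have hK : IsCompact (Set.Icc (0 : X → Y → ℝ) (fun _ _ => R)) := isCompact_Icc
  have hmem : ∀ k, iter k ∈ Set.Icc (0 : X → Y → ℝ) (fun _ _ => R) := by
    intro k
    refine ⟨fun x y => hnn k x y, fun x y => ?_⟩
    have h1 := hC (iter k) (hnn k)
    have h2 : F (iter k) ≤ F (iter 0) := hanti (Nat.zero_le k)
    have h3 : ∑ y, iter k x y ≤ ∑ x, ∑ y, iter k x y :=
      Finset.single_le_sum (f := fun x => ∑ y, iter k x y)
        (fun x _ => Finset.sum_nonneg fun y _ => hnn k x y) (Finset.mem_univ x)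
    have h4 : iter k x y ≤ ∑ y, iter k x y :=
      Finset.single_le_sum (f := fun y => iter k x y)
        (fun y _ => hnn k x y) (Finset.mem_univ y)
    show iter k x y ≤ F (iter 0) + C
    linarith
  have hcont := Ff_cont c ε h₁.good h₂.good μ ν hμ hν
  rw [← hF] at hcont
  have hclus : ∀ p ∈ Set.Icc (0 : X → Y → ℝ) (fun _ _ => R), MapClusterPt p atTop iter →
      ∀ q : X → Y → ℝ, (∀ x y, 0 ≤ q x y) → F p ≤ F q := by
    intro p hpK hp
    have hp0 : ∀ x y, 0 ≤ p x y := fun x y => hpK.1 x y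
    obtain ⟨ψ, hψ, hlim⟩ := MapClusterPt.tendsto_subseq hp
    refine coord_global c ε hε h₁.good h₂.good μ ν hμ hν p hp0 ?_
    intro x y s hs
    rw [← hF]
    have hnnq : ∀ q : X → Y → ℝ, (∀ x y, 0 ≤ q x y) →
        q + (s - q x y) • ee x y ∈ Set.Ici (0 : X → Y → ℝ) := by
      intro q hq a b
      by_cases hab : a = x ∧ b = y
      · obtain ⟨rfl, rfl⟩ := hab
        simpa [ee] using hs
      · simpa [ee, hab] using hq a b
    have t1 : Tendsto (fun k => F (iter (ψ k))) atTop (𝓝 (F p)) := by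
      refine (hcont p hpK.1).tendsto.comp (tendsto_nhdsWithin_iff.2 ⟨hlim, ?_⟩)
      exact Eventually.of_forall fun k => (hmem (ψ k)).1
    have t2 : Tendsto (fun k => F (iter (ψ k) + (s - iter (ψ k) x y) • ee x y)) atTop
        (𝓝 (F (p + (s - p x y) • ee x y))) := by
      refine (hcont _ (hnnq p hp0)).tendsto.comp (tendsto_nhdsWithin_iff.2 ⟨?_, ?_⟩)
      · have : Continuous (fun q : X → Y → ℝ => q + (s - q x y) • (ee x y : X → Y → ℝ)) := by
          fun_prop
        exact (this.tendsto p).comp hlim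
      · exact Eventually.of_forall fun k => hnnq _ (hnn (ψ k))
    have := le_of_tendsto_of_tendsto (t1.sub t2) (hgap.comp hψ.tendsto_atTop)
      (Eventually.of_forall fun k => (hstep (ψ k) (hnn (ψ k))).2.2 x y s hs)
    linarith
  have huniq : ∀ p q : X → Y → ℝ, (∀ x y, 0 ≤ p x y) → (∀ x y, 0 ≤ q x y) →
      (∀ r : X → Y → ℝ, (∀ x y, 0 ≤ r x y) → F p ≤ F r) →
      (∀ r : X → Y → ℝ, (∀ x y, 0 ≤ r x y) → F q ≤ F r) → p = q := by
    intro p q hp hq hpm hqm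
    exact (Ff_strictConvex c ε hε h₁.good h₂.good μ ν hμ hν).eq_of_isMinOn
      (fun r hr => hpm r fun x y => hr x y) (fun r hr => hqm r fun x y => hr x y)
      (fun x y => hp x y) (fun x y => hq x y)
  obtain ⟨po, hpoK, hpo⟩ := hK.exists_mapClusterPt (f := atTop) (u := iter)
    (tendsto_principal.2 (Eventually.of_forall hmem))
  have hpo0 : ∀ x y, 0 ≤ po x y := fun x y => hpoK.1 x y
  have hpom := hclus po hpoK hpo
  refine ⟨po, hpo0, ?_, ?_, ?_⟩
  · intro q hq
    rw [hE _ hpo0, hE _ hq]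
    exact_mod_cast hpom q hq
  · intro q hq hqm
    refine huniq q po hq hpo0 (fun r hr => ?_) hpom
    have := hqm r hr
    rw [hE _ hq, hE _ hr] at this
    exact_mod_cast this
  · have hT : Tendsto iter atTop (𝓝 po) :=
      hK.tendsto_nhds_of_unique_mapClusterPt (Eventually.of_forall hmem) fun q hqK hq =>
        huniq q po (fun x y => hqK.1 x y) hpo0 (hclus q hqK hq) hpom
    intro x y
    exact ((continuous_apply_apply x y).tendsto po).comp hT

end
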